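/- Let n ≥ 2, 1 < m < n, and let θ satisfy 0 < θ < min{1/2, (m−1)/2}. There exists a constant C > 0 such that for every Schwartz function f on ℝⁿ, ‖ ⟨x⟩^{1/2+θ} |D_x|^{−(m−1)/2+θ} f ‖_{L²(ℝⁿ)} ≤ C ‖ ⟨x⟩^{m/2} f ‖_{L²(ℝⁿ)}. -/

import Mathlib

open MeasureTheory Real Complex RealInnerProductSpace

noncomputable section

/-- Fourier transform with convention `(2π)^(-n/2) ∫ e^(-ix·ξ) f(x) dx`. -/
def FT (n : ℕ) (f : EuclideanSpace ℝ (Fin n) → ℂ) (ξ : EuclideanSpace ℝ (Fin n)) : ℂ :=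
  ((2 * π) ^ (-(n : ℝ) / 2) : ℝ) •
    ∫ x : EuclideanSpace ℝ (Fin n), Complex.exp (-Complex.I * ((⟪x, ξ⟫ : ℝ) : ℂ)) * f x

/-- Inverse Fourier transform. -/
def IFT (n : ℕ) (F : EuclideanSpace ℝ (Fin n) → ℂ) (x : EuclideanSpace ℝ (Fin n)) : ℂ :=
  ((2 * π) ^ (-(n : ℝ) / 2) : ℝ) •
    ∫ ξ : EuclideanSpace ℝ (Fin n), Complex.exp (Complex.I * ((⟪x, ξ⟫ : ℝ) : ℂ)) * F ξ

/-- Fourier multiplier with symbol `q`: `q(D_x) f = IFT (q · FT f)`. -/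
def mult (n : ℕ) (q : EuclideanSpace ℝ (Fin n) → ℂ) (f : EuclideanSpace ℝ (Fin n) → ℂ) :
    EuclideanSpace ℝ (Fin n) → ℂ :=
  IFT n fun ξ => q ξ * FT n f ξ

section Bracket

variable {E : Type*} [SeminormedAddCommGroup E]

theorem one_le_sqrt_one_add_norm_sq (x : E) : 1 ≤ √(1 + ‖x‖ ^ 2) :=
  Real.one_le_sqrt.2 (by nlinarith [sq_nonneg ‖x‖])

theorem norm_le_sqrt_one_add_norm_sq (x : E) : ‖x‖ ≤ √(1 + ‖x‖ ^ 2) :=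
  Real.le_sqrt_of_sq_le (by linarith)

theorem sqrt_one_add_norm_sq_le_add (x y : E) :
    √(1 + ‖x‖ ^ 2) ≤ √(1 + ‖y‖ ^ 2) + ‖x - y‖ := by
  have h1 := norm_le_sqrt_one_add_norm_sq y
  have h2 : ‖x‖ ≤ ‖y‖ + ‖x - y‖ := by simpa using norm_add_le y (x - y)
  have h3 : √(1 + ‖y‖ ^ 2) ^ 2 = 1 + ‖y‖ ^ 2 := Real.sq_sqrt (by positivity)
  refine Real.sqrt_le_iff.2 ⟨by positivity, ?_⟩
  nlinarith [norm_nonneg x, norm_nonneg y, norm_nonneg (x - y)]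

end Bracket

section Kernel

open Module Metric
open scoped ENNReal

variable {E : Type*} [NormedAddCommGroup E] [InnerProductSpace ℝ E] [FiniteDimensional ℝ E]
  [MeasurableSpace E] [BorelSpace E]

/-- Dilation rule for the Lebesgue integral of a nonnegative function. -/
theorem lintegral_eq_mul_lintegral_comp_smul {g : E → ℝ≥0∞} (hg : Measurable g) {R : ℝ}
    (hR : 0 < R) :
    ∫⁻ z : E, g z = ENNReal.ofReal (R ^ (finrank ℝ E : ℝ)) * ∫⁻ z : E, g (R • z) := by
  have h := Measure.map_addHaar_smul (volume : Measure E) hR.ne'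
  have h2 : ∫⁻ z : E, g (R • z) = ∫⁻ z, g z ∂(Measure.map (R • ·) (volume : Measure E)) :=
    (lintegral_map hg (measurable_const_smul R)).symm
  rw [h2, h, lintegral_smul_measure, smul_eq_mul, ← mul_assoc, ← ENNReal.ofReal_mul (by positivity),
    abs_of_pos (by positivity), rpow_natCast, mul_inv_cancel₀ (by positivity), ENNReal.ofReal_one,
    one_mul]

theorem setLIntegral_norm_rpow_of_dilation {S : ℝ → Set E} (hS : ∀ R, MeasurableSet (S R))
    (hscale : ∀ R > 0, ∀ z : E, R • z ∈ S R ↔ z ∈ S 1) (p : ℝ) {R : ℝ} (hR : 0 < R) :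
    ∫⁻ z in S R, ENNReal.ofReal (‖z‖ ^ p)
      = (∫⁻ z in S 1, ENNReal.ofReal (‖z‖ ^ p)) * ENNReal.ofReal (R ^ (finrank ℝ E + p)) := by
  rw [← lintegral_indicator (hS R), ← lintegral_indicator (hS 1),
    lintegral_eq_mul_lintegral_comp_smul ((Measurable.indicator (by fun_prop) (hS R))) hR,
    rpow_add hR, ENNReal.ofReal_mul (by positivity), mul_comm _ (_ * _), mul_assoc,
    ← lintegral_const_mul _ (Measurable.indicator (by fun_prop) (hS 1))]
  congr 2
  funext z
  by_cases hz : z ∈ S 1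
  · rw [Set.indicator_of_mem hz, Set.indicator_of_mem ((hscale R hR z).2 hz), norm_smul,
      Real.norm_of_nonneg hR.le, mul_rpow hR.le (norm_nonneg _), ENNReal.ofReal_mul (by positivity)]
  · rw [Set.indicator_of_notMem hz, Set.indicator_of_notMem (fun h => hz ((hscale R hR z).1 h)),
      mul_zero]

theorem exists_lintegral_ball_norm_rpow_eq (hd : 1 ≤ finrank ℝ E) {p : ℝ}
    (hp : -(finrank ℝ E : ℝ) < p) :
    ∃ C : ℝ≥0∞, C ≠ ⊤ ∧ ∀ R > 0, ∫⁻ z in ball (0 : E) R, ENNReal.ofReal (‖z‖ ^ p)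
      = C * ENNReal.ofReal (R ^ (finrank ℝ E + p)) := by
  refine ⟨∫⁻ z in ball (0 : E) 1, ENNReal.ofReal (‖z‖ ^ p), ?_, fun R hR =>
    setLIntegral_norm_rpow_of_dilation (S := fun R => ball (0 : E) R)
      (fun R => measurableSet_ball) ?_ p hR⟩
  · have h : IntegrableOn (fun z : E => ‖z‖ ^ p) (ball 0 1) :=
      integrableOn_ball_of_norm_le_rpow (C := 1) (α := -p) hd (by linarith)
        (.of_forall fun z => by simp [abs_of_nonneg (rpow_nonneg (norm_nonneg z) p)])
        (Measurable.aestronglyMeasurable (by fun_prop))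
    exact h.lintegral_lt_top.ne
  · intro R hR z
    simp [norm_smul, abs_of_pos hR, hR]

theorem exists_lintegral_compl_ball_norm_rpow_eq {p : ℝ} (hp : p < -(finrank ℝ E : ℝ)) :
    ∃ C : ℝ≥0∞, C ≠ ⊤ ∧ ∀ R > 0, ∫⁻ z in (ball (0 : E) R)ᶜ, ENNReal.ofReal (‖z‖ ^ p)
      = C * ENNReal.ofReal (R ^ (finrank ℝ E + p)) := by
  refine ⟨∫⁻ z in (ball (0 : E) 1)ᶜ, ENNReal.ofReal (‖z‖ ^ p), ?_, fun R hR =>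
    setLIntegral_norm_rpow_of_dilation (S := fun R => (ball (0 : E) R)ᶜ)
      (fun R => measurableSet_ball.compl) ?_ p hR⟩
  · have h : IntegrableOn (fun z : E => ‖z‖ ^ p) (ball 0 1)ᶜ := by
      have h0 : Integrable (fun z : E => 2 ^ (-p) * (1 + ‖z‖) ^ (-(-p))) :=
        (integrable_one_add_norm (by linarith)).const_mul _
      refine h0.integrableOn.mono' (Measurable.aestronglyMeasurable (by fun_prop)) ?_
      filter_upwards [ae_restrict_mem measurableSet_ball.compl] with z hz
      have hz1 : 1 ≤ ‖z‖ := by simpa using hz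
      rw [Real.norm_of_nonneg (by positivity), neg_neg, rpow_neg zero_le_two, inv_mul_eq_div,
        ← div_rpow (by positivity) zero_le_two]
      have : 0 ≤ (finrank ℝ E : ℝ) := by positivity
      exact rpow_le_rpow_of_nonpos (by positivity) (by linarith) (by linarith)
    exact h.lintegral_lt_top.ne
  · intro R hR z
    simp [norm_smul, abs_of_pos hR, hR]

/-- Convolving the Riesz kernel of order `s` with `⟨y⟩^(-a)` gains the factor `⟨x⟩^s`. -/
theorem exists_lintegral_riesz_kernel_mul_le (hd : 1 ≤ finrank ℝ E) {s a : ℝ} (hs : 0 < s)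
    (hsa : s < a) (ha : a < finrank ℝ E) :
    ∃ C : ℝ≥0∞, C ≠ ⊤ ∧ ∀ x : E,
      ∫⁻ y : E, ENNReal.ofReal (‖x - y‖ ^ (s - finrank ℝ E)) *
          ENNReal.ofReal (√(1 + ‖y‖ ^ 2) ^ (-a))
        ≤ C * ENNReal.ofReal (√(1 + ‖x‖ ^ 2) ^ (s - a)) := by
  have : Nontrivial E := nontrivial_of_finrank_pos (R := ℝ) hd
  set d : ℝ := ((finrank ℝ E : ℕ) : ℝ)
  obtain ⟨C₁, hC₁, h₁⟩ := exists_lintegral_ball_norm_rpow_eq (E := E) hd (p := s - d) (by linarith)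
  obtain ⟨C₂, hC₂, h₂⟩ := exists_lintegral_ball_norm_rpow_eq (E := E) hd (p := -a) (by linarith)
  obtain ⟨C₃, hC₃, h₃⟩ :=
    exists_lintegral_compl_ball_norm_rpow_eq (E := E) (p := s - d - a) (by linarith)
  refine ⟨ENNReal.ofReal ((1 / 2) ^ (s - a)) * C₁ + ENNReal.ofReal ((1 / 2) ^ (s - d)) * C₂
      + ENNReal.ofReal ((1 / 3) ^ (s - d)) * C₃, by finiteness, fun x => ?_⟩
  set R := √(1 + ‖x‖ ^ 2) with hR
  have hR1 : 1 ≤ R := one_le_sqrt_one_add_norm_sq x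
  have hR0 : 0 < R := by linarith
  have hbound : ∀ᵐ y : E, ENNReal.ofReal (‖x - y‖ ^ (s - d)) *
      ENNReal.ofReal (√(1 + ‖y‖ ^ 2) ^ (-a)) ≤
      (ENNReal.ofReal ((R / 2) ^ (-a)) *
          (ball (0 : E) (R / 2)).indicator (fun z => ENNReal.ofReal (‖z‖ ^ (s - d))) (x - y)
        + ENNReal.ofReal ((R / 2) ^ (s - d)) *
          (ball (0 : E) R).indicator (fun z => ENNReal.ofReal (‖z‖ ^ (-a))) y)
        + ENNReal.ofReal ((1 / 3) ^ (s - d)) *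
          (ball (0 : E) R)ᶜ.indicator (fun z => ENNReal.ofReal (‖z‖ ^ (s - d - a))) y := by
    filter_upwards [compl_mem_ae_iff.2 (measure_singleton (0 : E))] with y hy
    have hy0 : 0 < ‖y‖ := norm_pos_iff.2 hy
    have hy1 := norm_le_sqrt_one_add_norm_sq y
    have hJ := one_le_sqrt_one_add_norm_sq y
    have hxy := sqrt_one_add_norm_sq_le_add x y
    by_cases hc : ‖x - y‖ < R / 2
    · refine le_trans ?_ (le_trans le_self_add le_self_add)
      rw [Set.indicator_of_mem (by simpa using hc), mul_comm]
      gcongr ?_ * _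
      refine ENNReal.ofReal_le_ofReal (rpow_le_rpow_of_nonpos (by positivity) (by linarith)
        (by linarith))
    push Not at hc
    have hk : ‖x - y‖ ^ (s - d) ≤ (R / 2) ^ (s - d) :=
      rpow_le_rpow_of_nonpos (by positivity) hc (by linarith)
    have hJa : √(1 + ‖y‖ ^ 2) ^ (-a) ≤ ‖y‖ ^ (-a) :=
      rpow_le_rpow_of_nonpos hy0 hy1 (by linarith)
    by_cases hyR : ‖y‖ < R
    · refine le_trans ?_ (le_trans le_add_self le_self_add)
      rw [Set.indicator_of_mem (by simpa using hyR)]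
      gcongr
    · refine le_trans ?_ le_add_self
      rw [Set.indicator_of_mem (by simpa using hyR), ← ENNReal.ofReal_mul (by positivity),
        ← ENNReal.ofReal_mul (by positivity), sub_eq_add_neg (s - d) a, rpow_add hy0, ← mul_assoc,
        ← mul_rpow (by norm_num) hy0.le]
      have hn : ‖y‖ ≤ ‖x‖ + ‖x - y‖ := by
        simpa [norm_sub_rev] using norm_add_le x (y - x)
      have hxR := norm_le_sqrt_one_add_norm_sq x
      gcongr ENNReal.ofReal (?_ * ?_)
      exact rpow_le_rpow_of_nonpos (by positivity) (by linarith) (by linarith)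
  have hm₁ : Measurable
      ((ball (0 : E) (R / 2)).indicator (fun z => ENNReal.ofReal (‖z‖ ^ (s - d)))) :=
    Measurable.indicator (by fun_prop) measurableSet_ball
  have hm₁' : Measurable fun y => (ball (0 : E) (R / 2)).indicator
      (fun z => ENNReal.ofReal (‖z‖ ^ (s - d))) (x - y) :=
    hm₁.comp (measurable_const.sub measurable_id)
  have hm₂ : Measurable
      ((ball (0 : E) R).indicator (fun z => ENNReal.ofReal (‖z‖ ^ (-a)))) :=
    Measurable.indicator (by fun_prop) measurableSet_ball
  have hm₃ : Measurable
      ((ball (0 : E) R)ᶜ.indicator (fun z => ENNReal.ofReal (‖z‖ ^ (s - d - a)))) :=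
    Measurable.indicator (by fun_prop) measurableSet_ball.compl
  refine (lintegral_mono_ae hbound).trans_eq ?_
  rw [lintegral_add_right _ (hm₃.const_mul _), lintegral_add_right _ (hm₂.const_mul _),
    lintegral_const_mul _ hm₁',
    lintegral_const_mul _ hm₂, lintegral_const_mul _ hm₃,
    lintegral_sub_left_eq_self
      ((ball (0 : E) (R / 2)).indicator (fun z => ENNReal.ofReal (‖z‖ ^ (s - d)))),
    lintegral_indicator measurableSet_ball, lintegral_indicator measurableSet_ball,
    lintegral_indicator measurableSet_ball.compl, h₁ _ (by positivity), h₂ _ hR0, h₃ _ hR0]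
  have e₁ : ENNReal.ofReal ((R / 2) ^ (-a)) * (C₁ * ENNReal.ofReal ((R / 2) ^ (d + (s - d)))) =
      ENNReal.ofReal ((1 / 2) ^ (s - a)) * C₁ * ENNReal.ofReal (R ^ (s - a)) := by
    rw [mul_left_comm, ← ENNReal.ofReal_mul (by positivity), ← rpow_add (by positivity),
      mul_comm _ C₁, mul_assoc, ← ENNReal.ofReal_mul (by positivity),
      ← mul_rpow (by positivity) (by positivity)]
    congr 3 <;> ring
  have e₂ : ENNReal.ofReal ((R / 2) ^ (s - d)) * (C₂ * ENNReal.ofReal (R ^ (d + -a))) =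
      ENNReal.ofReal ((1 / 2) ^ (s - d)) * C₂ * ENNReal.ofReal (R ^ (s - a)) := by
    rw [mul_left_comm, ← ENNReal.ofReal_mul (by positivity),
      mul_comm _ C₂, mul_assoc, ← ENNReal.ofReal_mul (by positivity),
      show s - a = (s - d) + (d + -a) by ring, rpow_add hR0 (s - d), ← mul_assoc,
      ← mul_rpow (by positivity) (by positivity)]
    congr 4; ring
  have e₃ : d + (s - d - a) = s - a := by ring
  rw [e₁, e₂, e₃, add_mul, add_mul, mul_assoc _ C₃]


/-- Schur test with power weights for the Riesz kernel of order `s`, in the scale-invariant case. -/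
theorem exists_lintegral_weighted_riesz_sq_le (hd : 1 ≤ finrank ℝ E) {s a b : ℝ} (hs : 0 < s)
    (hsa : s < a) (ha : a < finrank ℝ E) (hsb : s < b) (hb : b < finrank ℝ E) :
    ∃ C : ℝ≥0∞, C ≠ ⊤ ∧ ∀ F : E → ℝ≥0∞, Measurable F →
      ∫⁻ x : E, ENNReal.ofReal (√(1 + ‖x‖ ^ 2) ^ (a - b - s)) *
          (∫⁻ y : E, ENNReal.ofReal (‖x - y‖ ^ (s - finrank ℝ E)) * F y) ^ 2
        ≤ C * ∫⁻ y : E, ENNReal.ofReal (√(1 + ‖y‖ ^ 2) ^ (a - b + s)) * F y ^ 2 := by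
  obtain ⟨A, hA, hA'⟩ := exists_lintegral_riesz_kernel_mul_le (E := E) hd hs hsa ha
  obtain ⟨B, hB, hB'⟩ := exists_lintegral_riesz_kernel_mul_le (E := E) hd hs hsb hb
  refine ⟨A * B, by finiteness, fun F hF => ?_⟩
  set d : ℝ := ((finrank ℝ E : ℕ) : ℝ)
  let w : ℝ → E → ℝ≥0∞ := fun p x => ENNReal.ofReal (√(1 + ‖x‖ ^ 2) ^ p)
  let k : E → E → ℝ≥0∞ := fun x y => ENNReal.ofReal (‖x - y‖ ^ (s - d))
  have hw_add : ∀ p q x, w p x * w q x = w (p + q) x := fun p q x => by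
    have := one_le_sqrt_one_add_norm_sq x
    simp only [w]
    rw [← ENNReal.ofReal_mul (by positivity), ← rpow_add (by positivity)]
  have hw_zero : ∀ x, w 0 x = 1 := fun x => by simp [w]
  have hw : ∀ p, Measurable (w p) := fun p => by fun_prop
  have hk : Measurable (Function.uncurry k) := by fun_prop
  have hkx : ∀ x, Measurable (k x) := fun x => by fun_prop
  have hk_symm : ∀ x y, k x y = k y x := fun x y => by simp only [k, norm_sub_rev]
  have hpow : ∀ z : ℝ≥0∞, (z ^ (1 / 2 : ℝ)) ^ (2 : ℕ) = z := fun z => by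
    rw [← ENNReal.rpow_natCast, ← ENNReal.rpow_mul]; norm_num
  have hCS : ∀ x, (∫⁻ y, k x y * F y) ^ 2
      ≤ (A * w (s - a) x) * ∫⁻ y, k x y * (w a y * F y ^ 2) := by
    intro x
    have hmul : ∀ y, k x y * F y = (k x y * w (-a) y) ^ (1 / 2 : ℝ) *
        (k x y * (w a y * F y ^ 2)) ^ (1 / 2 : ℝ) := by
      intro y
      rw [← ENNReal.mul_rpow_of_nonneg _ _ (by norm_num)]
      have : k x y * w (-a) y * (k x y * (w a y * F y ^ 2)) = (k x y * F y) ^ 2 := by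
        calc _ = (w (-a) y * w a y) * (k x y * F y) ^ 2 := by ring
          _ = _ := by rw [hw_add, neg_add_cancel, hw_zero, one_mul]
      rw [this, ← ENNReal.rpow_natCast, ← ENNReal.rpow_mul]
      norm_num
    have hH := ENNReal.lintegral_mul_le_Lp_mul_Lq (volume : Measure E)
      (p := 2) (q := 2) Real.HolderConjugate.two_two
      (f := fun y => (k x y * w (-a) y) ^ (1 / 2 : ℝ))
      (g := fun y => (k x y * (w a y * F y ^ 2)) ^ (1 / 2 : ℝ))
      (by fun_prop) (by fun_prop)
    simp only [Pi.mul_apply, ← hmul, ← ENNReal.rpow_mul] at hH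
    norm_num at hH
    calc (∫⁻ y, k x y * F y) ^ 2 ≤ _ := pow_le_pow_left' hH 2
      _ = (∫⁻ y, k x y * w (-a) y) * ∫⁻ y, k x y * (w a y * F y ^ 2) := by
        rw [mul_pow, hpow, hpow]
      _ ≤ _ := by gcongr; exact hA' x
  calc ∫⁻ x, w (a - b - s) x * (∫⁻ y, k x y * F y) ^ 2
      ≤ ∫⁻ x, ∫⁻ y, A * (k x y * (w (-b) x * (w a y * F y ^ 2))) := by
        refine lintegral_mono fun x => ?_
        refine (mul_le_mul_right (hCS x) _).trans_eq ?_
        rw [lintegral_const_mul _ (by fun_prop),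
          show (-b) = (a - b - s) + (s - a) by ring, ← hw_add]
        have : ∫⁻ y, k x y * (w (a - b - s) x * w (s - a) x * (w a y * F y ^ 2)) =
            (w (a - b - s) x * w (s - a) x) * ∫⁻ y, k x y * (w a y * F y ^ 2) := by
          rw [← lintegral_const_mul _ (by fun_prop)]
          exact lintegral_congr fun y => by ring
        rw [this]
        ring
    _ = ∫⁻ y, ∫⁻ x, A * (k x y * (w (-b) x * (w a y * F y ^ 2))) := by
        refine lintegral_lintegral_swap (Measurable.aemeasurable ?_)
        fun_prop
    _ ≤ ∫⁻ y, A * B * (w (a - b + s) y * F y ^ 2) := by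
        refine lintegral_mono fun y => ?_
        have : ∀ x, A * (k x y * (w (-b) x * (w a y * F y ^ 2))) =
            A * (w a y * F y ^ 2) * (k y x * w (-b) x) := fun x => by rw [hk_symm]; ring
        simp_rw [this]
        rw [lintegral_const_mul _ (by fun_prop)]
        refine (mul_le_mul_right (hB' y) _).trans_eq ?_
        change A * (w a y * F y ^ 2) * (B * w (s - b) y) = _
        rw [show a - b + s = a + (s - b) by ring, ← hw_add]
        ring
    _ = A * B * ∫⁻ y, w (a - b + s) y * F y ^ 2 := lintegral_const_mul _ (by fun_prop)

end Kernel

section Multiplier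

open scoped ENNReal FourierTransform

theorem integral_rpow_mul_exp_neg_div_Ioi {α b : ℝ} (hα : 0 < α) (hb : 0 < b) :
    IntegrableOn (fun t : ℝ => t ^ (-α - 1) * Real.exp (-(b / t))) (Set.Ioi 0) ∧
      ∫ t in Set.Ioi (0 : ℝ), t ^ (-α - 1) * Real.exp (-(b / t)) = (1 / b) ^ α * Real.Gamma α := by
  let g : ℝ → ℝ := fun u => u ^ (α - 1) * Real.exp (-(b * u))
  have hg : IntegrableOn g (Set.Ioi 0) := by
    simpa [g] using integrableOn_rpow_mul_exp_neg_mul_rpow (s := α - 1) (p := 1) (b := b)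
      (by linarith) one_pos hb
  have hcongr : Set.EqOn (fun t : ℝ => (|(-1 : ℝ)| * t ^ ((-1 : ℝ) - 1)) • g (t ^ (-1 : ℝ)))
      (fun t : ℝ => t ^ (-α - 1) * Real.exp (-(b / t))) (Set.Ioi 0) := by
    intro t ht
    have ht : 0 < t := ht
    simp only [g, abs_neg, abs_one, one_mul, smul_eq_mul]
    rw [← rpow_mul ht.le, ← mul_assoc, ← rpow_add ht, rpow_neg_one, div_eq_mul_inv]
    ring_nf
  constructor
  · exact ((integrableOn_Ioi_comp_rpow_iff g (by norm_num)).2 hg).congr_fun hcongr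
      measurableSet_Ioi
  · rw [← setIntegral_congr_fun measurableSet_Ioi hcongr, integral_comp_rpow_Ioi g (by norm_num)]
    exact Real.integral_rpow_mul_exp_neg_mul_Ioi hα hb

theorem lintegral_rpow_mul_exp_neg_div_Ioi {α b : ℝ} (hα : 0 < α) (hb : 0 < b) :
    ∫⁻ t in Set.Ioi (0 : ℝ), ENNReal.ofReal (t ^ (-α - 1) * Real.exp (-(b / t)))
      = ENNReal.ofReal ((1 / b) ^ α * Real.Gamma α) := by
  obtain ⟨h₁, h₂⟩ := integral_rpow_mul_exp_neg_div_Ioi hα hb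
  rw [← h₂, ofReal_integral_eq_lintegral_ofReal h₁]
  filter_upwards [ae_restrict_mem measurableSet_Ioi] with t ht
  have ht : 0 < t := ht
  positivity

variable {n : ℕ}

local notation "𝕍" => EuclideanSpace ℝ (Fin n)

theorem FT_eq_fourier (f : 𝕍 → ℂ) (ξ : 𝕍) :
    FT n f ξ = ((2 * π) ^ (-(n : ℝ) / 2) : ℝ) • 𝓕 f ((2 * π)⁻¹ • ξ) := by
  rw [FT, Real.fourier_eq']
  congr 2
  funext x
  rw [smul_eq_mul, real_inner_smul_right]
  congr 2
  have : (π : ℂ) ≠ 0 := by exact_mod_cast pi_ne_zero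
  push_cast
  field_simp

theorem continuous_FT (f : SchwartzMap 𝕍 ℂ) : Continuous (FT n f) := by
  have h : FT n f = fun ξ => ((2 * π) ^ (-(n : ℝ) / 2) : ℝ) • (𝓕 f) ((2 * π)⁻¹ • ξ) := by
    funext ξ
    rw [FT_eq_fourier, SchwartzMap.fourier_coe]
  rw [h]
  have := (𝓕 f).continuous
  fun_prop

theorem integrable_FT (f : SchwartzMap 𝕍 ℂ) : Integrable (FT n f) := by
  have h : FT n f = fun ξ => ((2 * π) ^ (-(n : ℝ) / 2) : ℝ) • (𝓕 f) ((2 * π)⁻¹ • ξ) := by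
    funext ξ
    rw [FT_eq_fourier, SchwartzMap.fourier_coe]
  rw [h]
  exact (((𝓕 f).integrable (μ := volume)).comp_smul
    (inv_ne_zero two_pi_pos.ne')).fun_smul _

theorem norm_FT_le (f : 𝕍 → ℂ) (ξ : 𝕍) :
    ‖FT n f ξ‖ ≤ (2 * π) ^ (-(n : ℝ) / 2) * ∫ x, ‖f x‖ := by
  rw [FT, norm_smul, Real.norm_of_nonneg (by positivity)]
  gcongr
  refine (norm_integral_le_integral_norm _).trans_eq (integral_congr_ae (.of_forall fun x => ?_))
  simp [Complex.norm_exp]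

theorem integrable_norm_rpow_mul_norm_FT (hn : 1 ≤ n) {s : ℝ} (hs : 0 < s) (hsn : s < n)
    (f : SchwartzMap 𝕍 ℂ) : Integrable fun ξ : 𝕍 => ‖ξ‖ ^ (-s) * ‖FT n f ξ‖ := by
  have hmeas : AEStronglyMeasurable (fun ξ : 𝕍 => ‖ξ‖ ^ (-s) * ‖FT n f ξ‖) :=
    (Measurable.mul (by fun_prop) (continuous_FT f).norm.measurable).aestronglyMeasurable
  rw [← integrableOn_univ, ← Set.union_compl_self (Metric.ball (0 : 𝕍) 1)]
  refine IntegrableOn.union ?_ ?_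
  · refine integrableOn_ball_of_norm_le_rpow (α := s)
      (C := (2 * π) ^ (-(n : ℝ) / 2) * ∫ x, ‖f x‖) (by simpa using hn) (by simpa using hsn)
      (.of_forall fun ξ => ?_) hmeas
    rw [Real.norm_of_nonneg (by positivity), mul_comm]
    gcongr
    exact norm_FT_le f ξ
  · refine (integrable_FT f).norm.integrableOn.mono' hmeas.restrict ?_
    filter_upwards [ae_restrict_mem measurableSet_ball.compl] with ξ hξ
    have h1 : 1 ≤ ‖ξ‖ := by simpa using hξ
    rw [Real.norm_of_nonneg (by positivity)]
    exact mul_le_of_le_one_left (norm_nonneg _) (rpow_le_one_of_one_le_of_nonpos h1 (by linarith))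

theorem norm_cexp_I_mul (r : ℝ) : ‖cexp (Complex.I * r)‖ = 1 := by
  simp [Complex.norm_exp]

/-- The heat semigroup in Fourier variables is convolution with a Gaussian. -/
theorem integral_cexp_mul_gaussian_mul_FT (f : SchwartzMap 𝕍 ℂ) {t : ℝ} (ht : 0 < t) (x : 𝕍) :
    ∫ ξ : 𝕍, cexp (Complex.I * ((⟪x, ξ⟫ : ℝ) : ℂ)) * ((Real.exp (-(‖ξ‖ ^ 2 * t)) : ℝ) * FT n f ξ)
      = ((2 * π) ^ (-(n : ℝ) / 2) : ℝ) •
        ∫ y : 𝕍, (((π / t) ^ ((n : ℝ) / 2) * Real.exp (-(‖x - y‖ ^ 2 / 4 / t)) : ℝ) : ℂ) * f y := by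
  let G : 𝕍 → 𝕍 → ℂ := fun ξ y => cexp (-t * ‖ξ‖ ^ 2 + Complex.I * ((⟪x - y, ξ⟫ : ℝ) : ℂ)) * f y
  have hgauss : Integrable fun ξ : 𝕍 => cexp (-t * ‖ξ‖ ^ 2) := by
    simpa using GaussianFourier.integrable_cexp_neg_mul_sq_norm_add (b := t) (V := 𝕍)
      (by simpa using ht) 0 0
  have hG : Integrable (Function.uncurry G) (volume.prod volume) := by
    refine (hgauss.mul_prod (f.integrable (μ := volume))).mono ?_ (.of_forall fun p => ?_)
    · have : Continuous (Function.uncurry G) := by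
        have := f.continuous
        simp only [G, Function.uncurry_def]
        fun_prop
      exact this.aestronglyMeasurable
    · simp only [Function.uncurry, G, Complex.exp_add, norm_mul, norm_cexp_I_mul, mul_one, le_refl]
  have hL : ∀ ξ : 𝕍, cexp (Complex.I * ((⟪x, ξ⟫ : ℝ) : ℂ)) *
      ((Real.exp (-(‖ξ‖ ^ 2 * t)) : ℝ) * FT n f ξ)
      = ((2 * π) ^ (-(n : ℝ) / 2) : ℝ) • ∫ y, G ξ y := by
    intro ξ
    rw [FT, mul_smul_comm, mul_smul_comm, ← integral_const_mul, ← integral_const_mul]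
    congr 2
    funext y
    simp only [G]
    rw [← mul_assoc, ← mul_assoc, Complex.ofReal_exp, ← Complex.exp_add, ← Complex.exp_add,
      inner_sub_left]
    congr 2
    push_cast
    ring
  simp_rw [hL]
  rw [integral_smul, integral_integral_swap hG]
  congr 2
  funext y
  simp only [G]
  rw [integral_mul_const, GaussianFourier.integral_cexp_neg_mul_sq_norm_add (by simpa using ht)]
  congr 1
  rw [finrank_euclideanSpace_fin, Complex.ofReal_mul, Complex.ofReal_cpow (by positivity),
    Complex.ofReal_exp]
  congr 2
  · push_cast; rfl
  · push_cast; rfl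
  · push_cast
    rw [Complex.I_sq]
    have : (t : ℂ) ≠ 0 := by exact_mod_cast ht.ne'
    field_simp

theorem norm_rpow_neg_eq_integral {s : ℝ} (hs : 0 < s) {ξ : 𝕍} (hξ : ξ ≠ 0) :
    ‖ξ‖ ^ (-s) = (Real.Gamma (s / 2))⁻¹ *
      ∫ t in Set.Ioi (0 : ℝ), t ^ (s / 2 - 1) * Real.exp (-(‖ξ‖ ^ 2 * t)) := by
  have h0 : 0 < ‖ξ‖ := norm_pos_iff.2 hξ
  have hΓ := (Real.Gamma_pos_of_pos (half_pos hs)).ne'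
  rw [Real.integral_rpow_mul_exp_neg_mul_Ioi (half_pos hs) (by positivity), one_div,
    inv_rpow (by positivity), ← rpow_natCast, ← rpow_mul h0.le, rpow_neg h0.le]
  field_simp
  norm_num

theorem integrable_subordinated (hn : 1 ≤ n) {s : ℝ} (hs : 0 < s) (hsn : s < n)
    (f : SchwartzMap 𝕍 ℂ) (x : 𝕍) :
    Integrable (Function.uncurry fun (ξ : 𝕍) (t : ℝ) => cexp (Complex.I * ((⟪x, ξ⟫ : ℝ) : ℂ)) *
        (((t ^ (s / 2 - 1) * Real.exp (-(‖ξ‖ ^ 2 * t)) : ℝ) : ℂ) * FT n f ξ))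
      (volume.prod (volume.restrict (Set.Ioi 0))) := by
  have : Nonempty (Fin n) := ⟨⟨0, hn⟩⟩
  have hFT := (continuous_FT f).measurable
  have hne : ∀ᵐ ξ : 𝕍, ξ ≠ 0 := compl_mem_ae_iff.2 (measure_singleton (0 : 𝕍))
  have hnorm : ∀ ξ : 𝕍, ∀ t ∈ Set.Ioi (0 : ℝ), ‖cexp (Complex.I * ((⟪x, ξ⟫ : ℝ) : ℂ)) *
      (((t ^ (s / 2 - 1) * Real.exp (-(‖ξ‖ ^ 2 * t)) : ℝ) : ℂ) * FT n f ξ)‖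
      = t ^ (s / 2 - 1) * Real.exp (-(‖ξ‖ ^ 2 * t)) * ‖FT n f ξ‖ := by
    intro ξ t ht
    have ht : 0 < t := ht
    rw [norm_mul, norm_cexp_I_mul, one_mul, norm_mul, Complex.norm_real,
      Real.norm_of_nonneg (by positivity)]
  refine (integrable_prod_iff (Measurable.aestronglyMeasurable ?_)).2 ⟨?_, ?_⟩
  · simp only [Function.uncurry_def]
    fun_prop
  · filter_upwards [hne] with ξ hξ
    have h0 : 0 < ‖ξ‖ := norm_pos_iff.2 hξ
    have hg : IntegrableOn (fun t : ℝ => t ^ (s / 2 - 1) * Real.exp (-(‖ξ‖ ^ 2 * t)))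
        (Set.Ioi 0) := by
      simpa using integrableOn_rpow_mul_exp_neg_mul_rpow (s := s / 2 - 1) (p := 1)
        (b := ‖ξ‖ ^ 2) (by linarith) one_pos (by positivity)
    exact ((Integrable.ofReal (𝕜 := ℂ) hg).mul_const (FT n f ξ)).const_mul
      (cexp (Complex.I * ((⟪x, ξ⟫ : ℝ) : ℂ)))
  · refine ((integrable_norm_rpow_mul_norm_FT hn hs hsn f).const_mul
      (Real.Gamma (s / 2))).congr ?_
    filter_upwards [hne] with ξ hξ
    simp only [Function.uncurry]
    rw [setIntegral_congr_fun measurableSet_Ioi (hnorm ξ), integral_mul_const,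
      norm_rpow_neg_eq_integral hs hξ]
    have hΓ := (Real.Gamma_pos_of_pos (half_pos hs)).ne'
    field_simp

/-- The multiplier `|D|^(-s)` as a superposition of heat semigroups. -/
theorem mult_norm_rpow_neg_eq (hn : 1 ≤ n) {s : ℝ} (hs : 0 < s) (hsn : s < n)
    (f : SchwartzMap 𝕍 ℂ) (x : 𝕍) :
    mult n (fun ξ => ((‖ξ‖ ^ (-s) : ℝ) : ℂ)) f x =
      ((2 * π) ^ (-(n : ℝ) / 2) * (Real.Gamma (s / 2))⁻¹ * (2 * π) ^ (-(n : ℝ) / 2) : ℝ) •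
        ∫ t in Set.Ioi (0 : ℝ), ∫ y : 𝕍, ((t ^ (s / 2 - 1) *
          ((π / t) ^ ((n : ℝ) / 2) * Real.exp (-(‖x - y‖ ^ 2 / 4 / t))) : ℝ) : ℂ) * f y := by
  have : Nonempty (Fin n) := ⟨⟨0, hn⟩⟩
  have hne : ∀ᵐ ξ : 𝕍, ξ ≠ 0 := compl_mem_ae_iff.2 (measure_singleton (0 : 𝕍))
  have hsub : ∀ᵐ ξ : 𝕍, cexp (Complex.I * ((⟪x, ξ⟫ : ℝ) : ℂ)) *
      (((‖ξ‖ ^ (-s) : ℝ) : ℂ) * FT n f ξ) = (Real.Gamma (s / 2))⁻¹ •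
        ∫ t in Set.Ioi (0 : ℝ), cexp (Complex.I * ((⟪x, ξ⟫ : ℝ) : ℂ)) *
          (((t ^ (s / 2 - 1) * Real.exp (-(‖ξ‖ ^ 2 * t)) : ℝ) : ℂ) * FT n f ξ) := by
    filter_upwards [hne] with ξ hξ
    rw [integral_const_mul, integral_mul_const, integral_complex_ofReal,
      norm_rpow_neg_eq_integral hs hξ, Complex.real_smul]
    push_cast
    ring
  rw [mult, IFT, integral_congr_ae hsub, integral_smul,
    integral_integral_swap (integrable_subordinated hn hs hsn f x), mul_smul, mul_smul]
  congr 2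
  rw [← integral_smul]
  refine setIntegral_congr_fun measurableSet_Ioi fun t ht => ?_
  have ht : 0 < t := ht
  calc _ = ∫ ξ : 𝕍, ((t ^ (s / 2 - 1) : ℝ) : ℂ) * (cexp (Complex.I * ((⟪x, ξ⟫ : ℝ) : ℂ)) *
          ((Real.exp (-(‖ξ‖ ^ 2 * t)) : ℝ) * FT n f ξ)) := by
        refine integral_congr_ae (.of_forall fun ξ => ?_)
        push_cast
        ring
    _ = _ := by
        rw [integral_const_mul, integral_cexp_mul_gaussian_mul_FT f ht, mul_smul_comm,
          ← integral_const_mul]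
        congr 2
        funext y
        push_cast
        ring

/-- Pointwise domination of `|D|^(-s) f` by the Riesz potential of `|f|`. -/
theorem exists_enorm_mult_norm_rpow_neg_le (hn : 1 ≤ n) {s : ℝ} (hs : 0 < s) (hsn : s < n) :
    ∃ C : ℝ≥0∞, C ≠ ⊤ ∧ ∀ (f : SchwartzMap 𝕍 ℂ) (x : 𝕍),
      ‖mult n (fun ξ => ((‖ξ‖ ^ (-s) : ℝ) : ℂ)) f x‖ₑ
        ≤ C * ∫⁻ y, ENNReal.ofReal (‖x - y‖ ^ (s - n)) * ‖f y‖ₑ := by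
  have : Nonempty (Fin n) := ⟨⟨0, hn⟩⟩
  set c : ℝ := (2 * π) ^ (-(n : ℝ) / 2) * (Real.Gamma (s / 2))⁻¹ * (2 * π) ^ (-(n : ℝ) / 2)
  set α : ℝ := (n - s) / 2 with hα
  have hα0 : 0 < α := by rw [hα]; linarith
  set K : ℝ := π ^ ((n : ℝ) / 2) * (4 ^ α * Real.Gamma α)
  refine ⟨‖c‖ₑ * ENNReal.ofReal K, by finiteness, fun f x => ?_⟩
  have hf := f.continuous.measurable
  let H : ℝ → 𝕍 → ℝ := fun t y =>
    t ^ (s / 2 - 1) * ((π / t) ^ ((n : ℝ) / 2) * Real.exp (-(‖x - y‖ ^ 2 / 4 / t)))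
  have hker : ∀ y : 𝕍, y ≠ x →
      ∫⁻ t in Set.Ioi (0 : ℝ), ENNReal.ofReal (H t y)
        = ENNReal.ofReal K * ENNReal.ofReal (‖x - y‖ ^ (s - n)) := by
    intro y hy
    have h0 : 0 < ‖x - y‖ := norm_pos_iff.2 (sub_ne_zero.2 hy.symm)
    have hH : ∀ t ∈ Set.Ioi (0 : ℝ), ENNReal.ofReal (H t y) = ENNReal.ofReal (π ^ ((n : ℝ) / 2)) *
        ENNReal.ofReal (t ^ (-α - 1) * Real.exp (-(‖x - y‖ ^ 2 / 4 / t))) := by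
      intro t ht
      have ht : 0 < t := ht
      rw [← ENNReal.ofReal_mul (by positivity)]
      congr 1
      simp only [H]
      rw [div_rpow pi_pos.le ht.le, show -α - 1 = (s / 2 - 1) - (n : ℝ) / 2 by rw [hα]; ring,
        rpow_sub ht (s / 2 - 1)]
      ring
    rw [setLIntegral_congr_fun measurableSet_Ioi hH, lintegral_const_mul _ (by fun_prop),
      lintegral_rpow_mul_exp_neg_div_Ioi hα0 (by positivity), ← ENNReal.ofReal_mul (by positivity),
      ← ENNReal.ofReal_mul (by positivity)]
    congr 1
    rw [one_div_div, div_rpow (by positivity) (by positivity), ← rpow_natCast, ← rpow_mul h0.le,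
      show s - n = -((2 : ℕ) * α) by rw [hα]; push_cast; ring, rpow_neg h0.le]
    simp only [K]
    ring
  rw [mult_norm_rpow_neg_eq hn hs hsn, enorm_smul, mul_assoc ‖c‖ₑ]
  gcongr
  calc ‖∫ t in Set.Ioi (0 : ℝ), ∫ y : 𝕍, ((H t y : ℝ) : ℂ) * f y‖ₑ
      ≤ ∫⁻ t in Set.Ioi (0 : ℝ), ∫⁻ y : 𝕍, ENNReal.ofReal (H t y) * ‖f y‖ₑ := by
        refine (enorm_integral_le_lintegral_enorm _).trans ?_
        refine setLIntegral_mono' measurableSet_Ioi fun t ht => ?_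
        have ht : 0 < t := ht
        refine (enorm_integral_le_lintegral_enorm _).trans_eq (lintegral_congr fun y => ?_)
        have hH0 : 0 ≤ H t y := by positivity
        rw [enorm_mul, ← ofReal_norm, Complex.norm_real, Real.norm_of_nonneg hH0]
    _ = ∫⁻ y : 𝕍, ∫⁻ t in Set.Ioi (0 : ℝ), ENNReal.ofReal (H t y) * ‖f y‖ₑ := by
        refine lintegral_lintegral_swap (Measurable.aemeasurable ?_)
        simp only [Function.uncurry_def, H]
        fun_prop
    _ = ∫⁻ y : 𝕍, ENNReal.ofReal K * (ENNReal.ofReal (‖x - y‖ ^ (s - n)) * ‖f y‖ₑ) := by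
        refine lintegral_congr_ae ?_
        filter_upwards [compl_mem_ae_iff.2 (measure_singleton x)] with y hy
        rw [lintegral_mul_const _ (by fun_prop), hker y hy, mul_assoc]
    _ = _ := lintegral_const_mul _ (by fun_prop)

end Multiplier

theorem eLpNorm_two_sqrt_rpow_mul_sq {E : Type*} [SeminormedAddCommGroup E] [MeasurableSpace E]
    (μ : Measure E) (p : ℝ) (g : E → ℂ) :
    eLpNorm (fun x => ((√(1 + ‖x‖ ^ 2) ^ p : ℝ) : ℂ) * g x) 2 μ ^ 2
      = ∫⁻ x, ENNReal.ofReal (√(1 + ‖x‖ ^ 2) ^ (2 * p)) * ‖g x‖ₑ ^ 2 ∂μ := by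
  have h := eLpNorm_nnreal_pow_eq_lintegral (μ := μ) (p := 2)
    (f := fun x => ((√(1 + ‖x‖ ^ 2) ^ p : ℝ) : ℂ) * g x) two_ne_zero
  simp only [NNReal.coe_ofNat, ENNReal.coe_ofNat, ENNReal.rpow_ofNat] at h
  rw [h]
  refine lintegral_congr fun x => ?_
  have hx := one_le_sqrt_one_add_norm_sq x
  rw [enorm_mul, mul_pow, ← ofReal_norm, Complex.norm_real, Real.norm_of_nonneg (by positivity),
    ← ENNReal.ofReal_pow (by positivity), mul_comm 2 p, rpow_mul (by positivity), rpow_ofNat]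

theorem weighted_negative_order_bound (n : ℕ) (hn : 2 ≤ n) (m : ℝ) (hm1 : 1 < m)
    (hmn : m < n) (θ : ℝ) (hθ0 : 0 < θ) (hθ1 : θ < min (1 / 2) ((m - 1) / 2)) :
    ∃ C > 0, ∀ f : SchwartzMap (EuclideanSpace ℝ (Fin n)) ℂ,
      eLpNorm (fun x : EuclideanSpace ℝ (Fin n) =>
          ((Real.sqrt (1 + ‖x‖ ^ 2) ^ (1 / 2 + θ) : ℝ) : ℂ) *
            mult n (fun ξ => ((‖ξ‖ ^ (-(m - 1) / 2 + θ) : ℝ) : ℂ)) (fun y => f y) x) 2 volume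
        ≤ ENNReal.ofReal C *
            eLpNorm (fun x : EuclideanSpace ℝ (Fin n) => ((Real.sqrt (1 + ‖x‖ ^ 2) ^ (m / 2) : ℝ) : ℂ) * f x) 2 volume := by
  have hθ2 : θ < 1 / 2 := hθ1.trans_le (min_le_left _ _)
  have hθ3 : θ < (m - 1) / 2 := hθ1.trans_le (min_le_right _ _)
  have hn2 : (2 : ℝ) ≤ n := by exact_mod_cast hn
  have hfin : Module.finrank ℝ (EuclideanSpace ℝ (Fin n)) = n := finrank_euclideanSpace_fin
  set s : ℝ := (m - 1) / 2 - θ with hs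
  have hs0 : 0 < s := by linarith
  obtain ⟨A, hA, hA'⟩ := exists_enorm_mult_norm_rpow_neg_le (n := n) (by lia) hs0 (by linarith)
  obtain ⟨B, hB, hB'⟩ := exists_lintegral_weighted_riesz_sq_le
    (E := EuclideanSpace ℝ (Fin n)) (s := s) (a := m / 2 + n / 2) (b := n / 2 - 1 / 2 - θ)
    (by rw [hfin]; lia) hs0 (by linarith) (by rw [hfin]; linarith) (by linarith)
    (by rw [hfin]; linarith)
  rw [hfin] at hB'
  have hD : A * B ^ (1 / 2 : ℝ) ≠ ⊤ := by finiteness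
  refine ⟨(A * B ^ (1 / 2 : ℝ)).toReal + 1, by positivity, fun f => ?_⟩
  have hC : A * B ^ (1 / 2 : ℝ) ≤ ENNReal.ofReal ((A * B ^ (1 / 2 : ℝ)).toReal + 1) :=
    (ENNReal.le_ofReal_iff_toReal_le hD (by positivity)).2 (by linarith)
  refine le_trans ?_ (mul_le_mul_left hC _)
  have hsq : (B ^ (1 / 2 : ℝ)) ^ 2 = B := by
    rw [← ENNReal.rpow_natCast, ← ENNReal.rpow_mul]; norm_num
  rw [← ENNReal.pow_le_pow_left_iff two_ne_zero, mul_pow, mul_pow, hsq,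
    eLpNorm_two_sqrt_rpow_mul_sq, eLpNorm_two_sqrt_rpow_mul_sq, mul_assoc,
    show -(m - 1) / 2 + θ = -s by rw [hs]; ring]
  have h := hB' (fun y => ‖f y‖ₑ) f.continuous.enorm.measurable
  rw [show m / 2 + n / 2 - (n / 2 - 1 / 2 - θ) - s = 2 * (1 / 2 + θ) by rw [hs]; ring,
    show m / 2 + n / 2 - (n / 2 - 1 / 2 - θ) + s = 2 * (m / 2) by rw [hs]; ring] at h
  refine le_trans ?_ (mul_le_mul_right h _)
  rw [← lintegral_const_mul' _ _ (by finiteness)]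
  refine lintegral_mono fun x => ?_
  rw [mul_left_comm, ← mul_pow]
  gcongr
  exact hA' f x
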